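/- Let L be a linear pencil of size m in n variables. Then for every linear polynomial f ∈ ℝ[X₁,…,Xₙ]₁: f ≥ 0 on S_L if and only if f + ε ∈ M_L for every ε > 0. -/

import Mathlib

open MvPolynomial Matrix

/-- The linear pencil `L = A 0 + X 1 * A 1 + ... + X n * A n` as a symmetric matrix
with entries in the polynomial ring `ℝ[X 1, ..., X n]`. -/
noncomputable def pencilPoly {n m : ℕ} (A : Fin (n+1) → Matrix (Fin m) (Fin m) ℝ) :
    Matrix (Fin m) (Fin m) (MvPolynomial (Fin n) ℝ) :=
  fun a b => MvPolynomial.C (A 0 a b) + ∑ i : Fin n, MvPolynomial.X i * MvPolynomial.C (A i.succ a b)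

/-- Evaluation of the pencil at a point `x ∈ ℝⁿ`. -/
def pencilEval {n m : ℕ} (A : Fin (n+1) → Matrix (Fin m) (Fin m) ℝ) (x : Fin n → ℝ) :
    Matrix (Fin m) (Fin m) ℝ :=
  A 0 + ∑ i : Fin n, x i • A i.succ

/-- The spectrahedron `S_L = {x ∈ ℝⁿ ∣ L(x) ⪰ 0}`. -/
def specSet {n m : ℕ} (A : Fin (n+1) → Matrix (Fin m) (Fin m) ℝ) : Set (Fin n → ℝ) :=
  {x | (pencilEval A x).PosSemidef}

/-- `vᵀ L v` for a vector `v` of polynomials. -/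
noncomputable def vLv {n m : ℕ} (A : Fin (n+1) → Matrix (Fin m) (Fin m) ℝ)
    (v : Fin m → MvPolynomial (Fin n) ℝ) : MvPolynomial (Fin n) ℝ :=
  ∑ a : Fin m, ∑ b : Fin m, v a * pencilPoly A a b * v b

/-- Membership in the quadratic module `M_L` associated to the pencil `L`:
`p = s + Σⱼ vⱼᵀ L vⱼ` with `s` a sum of squares. -/
def memQM {n m : ℕ} (A : Fin (n+1) → Matrix (Fin m) (Fin m) ℝ)
    (p : MvPolynomial (Fin n) ℝ) : Prop :=
  ∃ (k r : ℕ) (q : Fin k → MvPolynomial (Fin n) ℝ)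
    (v : Fin r → Fin m → MvPolynomial (Fin n) ℝ),
    p = ∑ i, (q i)^2 + ∑ j, vLv A (v j)

/-!
Let `M†` be the set of all `p` with `p + ε ∈ M_L` for every `ε > 0`, and let `I` be the largest
ideal inside `M†`. Since `4 h = (h + 1)² - (h - 1)²` for every polynomial `h`, the set `M_L \ I` is
convex, and completing the square shows that every `u` with `uᵀ L u ∈ I` lies in the kernel of `L`
modulo `I`. So, if `-1 ∉ M_L`, then `1` together with the `uᵀ L u`, for `u` running through the unit
sphere of a complement of that kernel, is a *compact* set whose convex hull avoids `I`. If `f ∉ M†`,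
the convex hull still avoids `I` after `-f` is adjoined, and separating it from `I` gives a linear
functional on the affine polynomials that vanishes on `I`, is positive on the compact set and
negative at `f`. Normalised to be `1` at `1`, it is evaluation at a point of `S_L`, where `f` is
therefore negative.
-/

section Convexity

lemma image_linearCombination_stdSimplex {ι E : Type*} [Fintype ι] [AddCommGroup E] [Module ℝ E]
    (p : ι → E) :
    Fintype.linearCombination ℝ p '' stdSimplex ℝ ι = convexHull ℝ (Set.range p) := by
  classical
  rw [← convexHull_rangle_single_eq_stdSimplex, LinearMap.image_convexHull, ← Set.range_comp]
  congr 2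
  ext i
  simp

variable {E : Type*} [AddCommGroup E] [Module ℝ E]

lemma convexHull_eq_iUnion_convexHull_range [FiniteDimensional ℝ E] (s : Set E) :
    convexHull ℝ s = ⋃ p ∈ Set.univ.pi fun _ : Fin (Module.finrank ℝ E + 1) => s,
      convexHull ℝ (Set.range p) := by
  refine subset_antisymm (fun x hx => ?_)
    (Set.iUnion₂_subset fun p hp => convexHull_mono (Set.range_subset_iff.mpr (by simpa using hp)))
  rw [convexHull_eq_union] at hx
  simp only [Set.mem_iUnion] at hx ⊢
  obtain ⟨t, hts, hind, hxt⟩ := hx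
  have : Nonempty t := (convexHull_nonempty_iff.mp ⟨x, hxt⟩).to_subtype
  have hcard : Fintype.card t ≤ Fintype.card (Fin (Module.finrank ℝ E + 1)) := by
    rw [Fintype.card_fin]
    exact hind.card_le_finrank_succ.trans (Nat.succ_le_succ (Submodule.finrank_le _))
  obtain ⟨e⟩ := Function.Embedding.nonempty_of_card_le hcard
  let p : Fin (Module.finrank ℝ E + 1) → E := (↑) ∘ Function.invFun e
  have hp : Set.range p = t := by
    rw [Set.range_comp, (Function.invFun_surjective e.injective).range_eq, Set.image_univ,
      Subtype.range_coe]
  exact ⟨p, fun i _ => hts (Function.invFun e i).2, hp ▸ hxt⟩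

variable [TopologicalSpace E]

lemma isCompact_convexHull [ContinuousAdd E] [ContinuousSMul ℝ E] [FiniteDimensional ℝ E]
    {s : Set E} (hs : IsCompact s) : IsCompact (convexHull ℝ s) := by
  simp only [convexHull_eq_iUnion_convexHull_range s, ← image_linearCombination_stdSimplex,
    Set.iUnion_image_left (fun p => ⇑(Fintype.linearCombination ℝ p))]
  rw [← Set.image_uncurry_prod]
  refine ((isCompact_univ_pi fun _ => hs).prod (isCompact_stdSimplex ℝ _)).image ?_
  simp only [Function.uncurry_def, Fintype.linearCombination_apply]
  fun_prop

variable [IsTopologicalAddGroup E] [ContinuousSMul ℝ E] [LocallyConvexSpace ℝ E] [T2Space E]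
  [FiniteDimensional ℝ E] {s : Set E} {W : Submodule ℝ E}

lemma exists_eq_zero_and_pos_of_disjoint_convexHull (hs : IsCompact s)
    (hsW : Disjoint (convexHull ℝ s) W) :
    ∃ φ : E →ₗ[ℝ] ℝ, (∀ w ∈ W, φ w = 0) ∧ ∀ z ∈ s, 0 < φ z := by
  obtain ⟨φ, u, v, hu, huv, hv⟩ := geometric_hahn_banach_compact_closed (convex_convexHull ℝ s)
    (isCompact_convexHull hs) W.convex W.closed_of_finiteDimensional hsW
  have hv0 : v < 0 := by simpa using hv 0 W.zero_mem
  refine ⟨-φ.toLinearMap, fun w hw => ?_, fun z hz => ?_⟩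
  · by_contra hne
    have hφw : φ w ≠ 0 := by simpa using hne
    have hlt : v < φ ((v / φ w) • w) := hv _ (W.smul_mem _ hw)
    rw [map_smul, smul_eq_mul, div_mul_cancel₀ _ hφw] at hlt
    exact lt_irrefl _ hlt
  · have hz0 : φ z < 0 := (hu z (subset_convexHull ℝ s hz)).trans (huv.trans hv0)
    simpa using hz0

lemma exists_eq_zero_and_pos_and_neg (hs : IsCompact s) (hne : s.Nonempty)
    (hsW : Disjoint (convexHull ℝ s) W) {a : E}
    (ha : ∀ y ∈ convexHull ℝ s, ∀ c : ℝ, 0 ≤ c → a - c • y ∉ W) :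
    ∃ φ : E →ₗ[ℝ] ℝ, (∀ w ∈ W, φ w = 0) ∧ (∀ z ∈ s, 0 < φ z) ∧ φ a < 0 := by
  have hdisj : Disjoint (convexHull ℝ (insert (-a) s)) W := by
    rw [convexHull_insert hne, convexJoin_singleton_left, Set.disjoint_iUnion₂_left]
    refine fun y hy => Set.disjoint_left.mpr ?_
    rintro _ ⟨c, d, hc, hd, hcd, rfl⟩ hW
    obtain rfl | hc := hc.eq_or_lt
    · obtain rfl : d = 1 := by linarith
      exact Set.disjoint_left.mp hsW hy (by simpa using hW)
    · refine ha y hy (c⁻¹ * d) (by positivity) ?_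
      convert W.smul_mem (-c⁻¹) hW using 1
      match_scalars <;> field_simp
  obtain ⟨φ, hφW, hφ⟩ := exists_eq_zero_and_pos_of_disjoint_convexHull (hs.insert (-a)) hdisj
  have hφa := hφ (-a) (Set.mem_insert _ _)
  rw [map_neg, neg_pos] at hφa
  exact ⟨φ, hφW, fun z hz => hφ z (Set.mem_insert_of_mem _ hz), hφa⟩

end Convexity

section RadicalModulo

variable {S V E : Type*} [CommRing S] [AddCommGroup V] [Module S V] [AddCommGroup E] [Module S E]

/-- The left radical modulo `W` of a bilinear map `B` with values in `E ⊇ W`, that is, the vectors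
`u` with `B u v ∈ W` for all `v`. -/
def radicalModulo (B : V →ₗ[S] V →ₗ[S] E) (W : Submodule S E) : Submodule S V :=
  LinearMap.ker (B.compr₂ W.mkQ)

lemma mem_radicalModulo {B : V →ₗ[S] V →ₗ[S] E} {W : Submodule S E} {u : V} :
    u ∈ radicalModulo B W ↔ ∀ v, B u v ∈ W := by
  simp [radicalModulo, LinearMap.ext_iff]

end RadicalModulo

section UnitSquares

variable {V E : Type*} [NormedAddCommGroup V] [NormedSpace ℝ V] [AddCommGroup E] [Module ℝ E]

/-- The values `B u u` of a bilinear map on the unit vectors `u` of a subspace. -/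
def unitSquares (B : V →ₗ[ℝ] V →ₗ[ℝ] E) (N : Submodule ℝ V) : Set E :=
  (fun u => B u u) '' (Metric.sphere 0 1 ∩ N)

variable {B : V →ₗ[ℝ] V →ₗ[ℝ] E} {N : Submodule ℝ V}

lemma isCompact_unitSquares {E : Type*} [NormedAddCommGroup E] [NormedSpace ℝ E]
    [FiniteDimensional ℝ V] (B : V →ₗ[ℝ] V →ₗ[ℝ] E) (N : Submodule ℝ V) :
    IsCompact (unitSquares B N) := by
  have := FiniteDimensional.proper_real V
  have hcont : Continuous fun u => B u u :=
    B.toContinuousBilinearMap.continuous.clm_apply continuous_id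
  exact ((isCompact_sphere _ _).inter_right N.closed_of_finiteDimensional).image hcont

lemma nonneg_map_self_of_mem {φ : E →ₗ[ℝ] ℝ} (hφ : ∀ z ∈ unitSquares B N, 0 ≤ φ z) {u : V}
    (hu : u ∈ N) : 0 ≤ φ (B u u) := by
  obtain rfl | hu0 := eq_or_ne u 0
  · simp
  have hnorm : ‖u‖ ≠ 0 := norm_ne_zero_iff.mpr hu0
  have hunit := hφ _ ⟨‖u‖⁻¹ • u, ⟨by simp [norm_smul, hnorm], N.smul_mem _ hu⟩, rfl⟩
  have hscale : φ (B u u) = ‖u‖ ^ 2 * φ (B (‖u‖⁻¹ • u) (‖u‖⁻¹ • u)) := by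
    simp only [map_smul, LinearMap.smul_apply, smul_eq_mul]
    field_simp
  rw [hscale]
  positivity

lemma nonneg_map_self_of_codisjoint (hB : ∀ u v, B u v = B v u) {W : Submodule ℝ E}
    (hN : Codisjoint (radicalModulo B W) N) {φ : E →ₗ[ℝ] ℝ} (hφW : ∀ w ∈ W, φ w = 0)
    (hφ : ∀ z ∈ unitSquares B N, 0 ≤ φ z) (u : V) : 0 ≤ φ (B u u) := by
  obtain ⟨k, hk, v, hv, rfl⟩ := Submodule.mem_sup.mp
    (hN.eq_top ▸ Submodule.mem_top : u ∈ radicalModulo B W ⊔ N)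
  have hφk (w : V) : φ (B k w) = 0 := hφW _ (mem_radicalModulo.mp hk w)
  have hred : φ (B (k + v) (k + v)) = φ (B v v) := by simp [hB v k, hφk]
  exact hred ▸ nonneg_map_self_of_mem hφ hv

end UnitSquares

section IdealCore

variable {R : Type*} [CommSemiring R] {T : AddSubmonoid R} {p : R}

/-- The largest ideal contained in an additive submonoid of a commutative semiring. -/
def idealCore (T : AddSubmonoid R) : Ideal R where
  carrier := {p | ∀ h, h * p ∈ T}
  zero_mem' h := by simp
  add_mem' hp hq h := by simpa only [mul_add] using T.add_mem (hp h) (hq h)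
  smul_mem' c p hp h := by simpa only [smul_eq_mul, mul_assoc] using hp (h * c)

lemma mem_of_mem_idealCore (hp : p ∈ idealCore T) : p ∈ T := by
  simpa using hp 1

end IdealCore

/-- A quadratic module of a commutative ring: a set containing `1` that is closed under addition
and under multiplication by squares. -/
structure QuadraticModule (R : Type*) [CommRing R] extends AddSubmonoid R where
  one_mem' : 1 ∈ carrier
  sq_mul_mem' (a : R) {p : R} : p ∈ carrier → a ^ 2 * p ∈ carrier

namespace QuadraticModule

section Ring

variable {R : Type*} [CommRing R]

instance : SetLike (QuadraticModule R) R where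
  coe M := M.carrier
  coe_injective M N h := by cases M; cases N; congr; exact SetLike.coe_injective h

instance : AddSubmonoidClass (QuadraticModule R) R where
  zero_mem M := M.zero_mem'
  add_mem {M} := M.add_mem'

variable (M : QuadraticModule R)

lemma one_mem : 1 ∈ M := M.one_mem'

variable {M} in
lemma sq_mul_mem (a : R) {p : R} (hp : p ∈ M) : a ^ 2 * p ∈ M := M.sq_mul_mem' a hp

lemma sq_mem (a : R) : a ^ 2 ∈ M := by
  simpa using sq_mul_mem a M.one_mem

end Ring

variable {R : Type*} [CommRing R] [Algebra ℝ R] {M : QuadraticModule R} {p q : R}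

lemma smul_mem {c : ℝ} (hc : 0 ≤ c) (hp : p ∈ M) : c • p ∈ M := by
  simpa [smul_pow, Real.sq_sqrt hc] using sq_mul_mem (√c • (1 : R)) hp

variable (M) in
lemma algebraMap_mem {c : ℝ} (hc : 0 ≤ c) : algebraMap ℝ R c ∈ M := by
  simpa [Algebra.algebraMap_eq_smul_one] using smul_mem hc M.one_mem

lemma mem_of_neg_one_mem (h : -1 ∈ M) (p : R) : p ∈ M := by
  have hp : p = ((1 / 2 : ℝ) • (p + 1)) ^ 2 + ((1 / 2 : ℝ) • (p - 1)) ^ 2 * (-1) := by algebra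
  rw [hp]
  exact add_mem (M.sq_mem _) (sq_mul_mem _ h)

/-- The closure of `M` along the direction `1`: the elements `p` with `p + ε ∈ M` for all real
`ε > 0`. -/
def closureAlongOne (M : QuadraticModule R) : AddSubmonoid R where
  carrier := {p | ∀ ε : ℝ, 0 < ε → p + algebraMap ℝ R ε ∈ M}
  zero_mem' ε hε := by simpa using M.algebraMap_mem hε.le
  add_mem' {p q} hp hq ε hε := by
    have hsplit : p + q + algebraMap ℝ R ε =
        (p + algebraMap ℝ R (ε / 2)) + (q + algebraMap ℝ R (ε / 2)) := by algebra
    rw [hsplit]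
    exact add_mem (hp _ (half_pos hε)) (hq _ (half_pos hε))

lemma mem_closureAlongOne_of_mem (hp : p ∈ M) : p ∈ M.closureAlongOne :=
  fun _ hε => add_mem hp (M.algebraMap_mem hε.le)

lemma mem_closureAlongOne_of_neg_sq_mem (hp : -p ^ 2 ∈ M.closureAlongOne) :
    p ∈ M.closureAlongOne := by
  intro ε hε
  have hscaled : (2 * ε) • (p + algebraMap ℝ R ε) =
      (p + algebraMap ℝ R ε) ^ 2 + (-p ^ 2 + algebraMap ℝ R (ε ^ 2)) := by algebra
  rw [← inv_smul_smul₀ (by positivity : 2 * ε ≠ 0) (p + algebraMap ℝ R ε), hscaled]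
  exact smul_mem (by positivity) (add_mem (M.sq_mem _) (hp _ (by positivity)))

/-- The largest ideal contained in the closure of `M` along `1`. -/
def closureIdeal (M : QuadraticModule R) : Ideal R := idealCore M.closureAlongOne

lemma mem_closureIdeal_of_add_mem (hp : p ∈ M) (hq : q ∈ M) (hpq : p + q ∈ M.closureIdeal) :
    p ∈ M.closureIdeal := by
  intro h
  set a : R := (1 / 2 : ℝ) • (h + 1)
  set b : R := (1 / 2 : ℝ) • (h - 1)
  have hdecomp : h * p = a ^ 2 * p + b ^ 2 * q + (-b ^ 2) * (p + q) := by
    simp only [a, b]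
    algebra
  rw [hdecomp]
  exact add_mem (mem_closureAlongOne_of_mem (add_mem (sq_mul_mem a hp) (sq_mul_mem b hq)))
    (hpq _)

lemma one_notMem_closureIdeal (h : -1 ∉ M) : 1 ∉ M.closureIdeal := by
  intro h1
  refine h ?_
  convert h1 (-2) 1 one_pos using 1
  rw [map_one]
  ring

variable (M) in
lemma convex_diff_closureIdeal : Convex ℝ ((M : Set R) \ M.closureIdeal) := by
  refine convex_iff_forall_pos.mpr fun x hx y hy a b ha hb _ => ?_
  have hax : a • x ∈ M := smul_mem ha.le hx.1
  have hby : b • y ∈ M := smul_mem hb.le hy.1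
  refine ⟨add_mem hax hby, fun hmem => hx.2 ?_⟩
  have haxI : a • x ∈ M.closureIdeal.restrictScalars ℝ := mem_closureIdeal_of_add_mem hax hby hmem
  exact (Submodule.smul_mem_iff _ ha.ne').mp haxI

lemma map_mem_closureIdeal_of_map_self_mem {P : Type*} [AddCommGroup P] [Module R P]
    {B : LinearMap.BilinForm R P} (hB : B.IsSymm) (hBM : ∀ w, B w w ∈ M) {u : P}
    (hu : B u u ∈ M.closureIdeal) (v : P) : B u v ∈ M.closureIdeal := by
  intro h
  refine mem_closureAlongOne_of_neg_sq_mem ?_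
  -- With this `a`, the terms of `B w w` other than `a ^ 2 * B u u` add up to `-(h * B u v) ^ 2`.
  set a : R := -((1 / 2 : ℝ) • (h * (1 + B v v))) with ha
  set w : P := a • u + (h * B u v) • v
  have hexpand : -(h * B u v) ^ 2 = B w w + (-a ^ 2) * B u u := by
    simp only [w, map_add, map_smul, LinearMap.add_apply, LinearMap.smul_apply, smul_eq_mul,
      hB.eq v u]
    simp only [ha]
    algebra
  rw [hexpand]
  exact add_mem (mem_closureAlongOne_of_mem (hBM w)) (hu _)

section Duality

variable {E V : Type*} [NormedAddCommGroup V] [NormedSpace ℝ V]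

lemma mapsTo_unitSquares_diff_closureIdeal [AddCommGroup E] [Module ℝ E] {ι : E →ₗ[ℝ] R}
    {B : V →ₗ[ℝ] V →ₗ[ℝ] E} (hBM : ∀ v, ι (B v v) ∈ M)
    (hrad : ∀ u, ι (B u u) ∈ M.closureIdeal → ∀ v, ι (B u v) ∈ M.closureIdeal)
    {N : Submodule ℝ V}
    (hN : Disjoint (radicalModulo B ((M.closureIdeal.restrictScalars ℝ).comap ι)) N) :
    Set.MapsTo ι (unitSquares B N) (M \ M.closureIdeal) := by
  rintro _ ⟨u, ⟨hu, huN⟩, rfl⟩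
  refine ⟨hBM u, fun hmem => ?_⟩
  have hu0 : u = 0 := Submodule.disjoint_def.mp hN u (mem_radicalModulo.mpr (hrad u hmem)) huN
  simp [hu0] at hu

theorem mem_closureAlongOne_of_forall_dual_nonneg [NormedAddCommGroup E] [NormedSpace ℝ E]
    [FiniteDimensional ℝ E] [FiniteDimensional ℝ V]
    {ι : E →ₗ[ℝ] R} {B : V →ₗ[ℝ] V →ₗ[ℝ] E} {e a : E} (he : ι e = 1) (hB : ∀ u v, B u v = B v u)
    (hBM : ∀ v, ι (B v v) ∈ M)
    (hrad : ∀ u, ι (B u u) ∈ M.closureIdeal → ∀ v, ι (B u v) ∈ M.closureIdeal)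
    (ha : ∀ φ : E →ₗ[ℝ] ℝ, φ e = 1 → (∀ v, 0 ≤ φ (B v v)) → 0 ≤ φ a) :
    ι a ∈ M.closureAlongOne := by
  by_cases hone : -1 ∈ M
  · exact mem_closureAlongOne_of_mem (mem_of_neg_one_mem hone _)
  by_contra haM
  set W : Submodule ℝ E := (M.closureIdeal.restrictScalars ℝ).comap ι
  obtain ⟨N, hN⟩ := Submodule.exists_isCompl (radicalModulo B W)
  set s : Set E := insert e (unitSquares B N)
  have hs : s ⊆ ι ⁻¹' (M \ M.closureIdeal) := Set.insert_subset
    (by simpa [he] using ⟨M.one_mem, one_notMem_closureIdeal hone⟩)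
    (mapsTo_unitSquares_diff_closureIdeal hBM hrad hN.disjoint)
  have hhull : convexHull ℝ s ⊆ ι ⁻¹' (M \ M.closureIdeal) :=
    convexHull_min hs (M.convex_diff_closureIdeal.linear_preimage ι)
  have hsep : ∀ y ∈ convexHull ℝ s, ∀ c : ℝ, 0 ≤ c → a - c • y ∉ W := by
    refine fun y hy c hc hW => haM ?_
    have hcy : ι (c • y) ∈ M := by simpa using smul_mem hc (hhull hy).1
    simpa using add_mem (mem_of_mem_idealCore hW) (mem_closureAlongOne_of_mem hcy)
  obtain ⟨φ, hφW, hφs, hφa⟩ := exists_eq_zero_and_pos_and_neg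
    ((isCompact_unitSquares B N).insert e) (Set.insert_nonempty _ _)
    (Set.disjoint_left.mpr fun y hy => (hhull hy).2) hsep
  have hφe : 0 < φ e := hφs e (Set.mem_insert _ _)
  have hφB := nonneg_map_self_of_codisjoint hB hN.codisjoint hφW
    fun z hz => (hφs z (Set.mem_insert_of_mem _ hz)).le
  have hφa' := ha ((φ e)⁻¹ • φ) (by simp [hφe.ne'])
    fun v => mul_nonneg (inv_nonneg.mpr hφe.le) (hφB v)
  exact (mul_neg_of_pos_of_neg (inv_pos.mpr hφe) hφa).not_ge hφa'

end Duality

end QuadraticModule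

section AffinePolynomials

variable {n : ℕ}

/-- The affine polynomial `a 0 + a 1 * X 1 + ... + a n * X n`, as a linear function of its
coefficient vector `a`. -/
noncomputable def affinePoly (n : ℕ) : (Fin (n + 1) → ℝ) →ₗ[ℝ] MvPolynomial (Fin n) ℝ :=
  Fintype.linearCombination ℝ (Fin.cons 1 X)

lemma affinePoly_apply (a : Fin (n + 1) → ℝ) :
    affinePoly n a = C (a 0) + ∑ i : Fin n, X i * C (a i.succ) := by
  simp [affinePoly, Fintype.linearCombination_apply, Fin.sum_univ_succ, smul_eq_C_mul, mul_comm]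

lemma affinePoly_single_zero : affinePoly n (Pi.single 0 1) = 1 := by
  simp [affinePoly]

lemma exists_affinePoly_eq {f : MvPolynomial (Fin n) ℝ} (hf : f.totalDegree ≤ 1) :
    ∃ a, affinePoly n a = f := by
  change f ∈ LinearMap.range (affinePoly n)
  rw [f.as_sum]
  refine Submodule.sum_mem _ fun s hs => ?_
  have hdeg : s.degree ≤ 1 := (le_totalDegree hs).trans hf
  obtain hs0 | hs1 : s.degree = 0 ∨ s.degree = 1 := by lia
  · rw [(Finsupp.degree_eq_zero_iff s).mp hs0]
    exact ⟨Pi.single 0 (coeff 0 f), by simp [affinePoly, smul_eq_C_mul]⟩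
  · obtain ⟨i, rfl⟩ := (Finsupp.sum_eq_one_iff s).mp hs1
    exact ⟨Pi.single i.succ (coeff (Finsupp.single i 1) f),
      by simp [affinePoly, X, smul_monomial]⟩

lemma eval_affinePoly {φ : (Fin (n + 1) → ℝ) →ₗ[ℝ] ℝ} (hφ : φ (Pi.single 0 1) = 1)
    (a : Fin (n + 1) → ℝ) :
    eval (fun i : Fin n => φ (Pi.single i.succ 1)) (affinePoly n a) = φ a := by
  have hbasis : φ a = ∑ i, a i * φ (Pi.single i 1) := by
    conv_lhs => rw [pi_eq_sum_univ' a]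
    simp
  rw [affinePoly_apply, hbasis, Fin.sum_univ_succ]
  simp [hφ, mul_comm]

end AffinePolynomials

lemma map_toBilin' {R S ι : Type*} [CommRing R] [CommRing S] [Fintype ι] [DecidableEq ι]
    (g : R →+* S) (M : Matrix ι ι R) (v w : ι → R) :
    g (M.toBilin' v w) = (M.map g).toBilin' (g ∘ v) (g ∘ w) := by
  simp [toBilin'_apply]

section Pencil

variable {n m : ℕ} {A : Fin (n + 1) → Matrix (Fin m) (Fin m) ℝ}

lemma pencilPoly_eq_affinePoly (a b : Fin m) :
    pencilPoly A a b = affinePoly n fun i => A i a b := by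
  rw [affinePoly_apply, pencilPoly]

lemma isSymm_pencilPoly (hA : ∀ i, (A i).IsSymm) : (pencilPoly A).IsSymm := by
  ext1 a b
  simp only [transpose_apply, pencilPoly, (hA _).apply a b]

lemma isSymm_pencilEval (hA : ∀ i, (A i).IsSymm) (x : Fin n → ℝ) : (pencilEval A x).IsSymm := by
  simp [IsSymm, pencilEval, transpose_sum, (hA _).eq]

lemma map_eval_pencilPoly (x : Fin n → ℝ) : (pencilPoly A).map (eval x) = pencilEval A x := by
  ext a b
  simp [pencilPoly, pencilEval, Matrix.sum_apply]

lemma vLv_eq_toBilin' (v : Fin m → MvPolynomial (Fin n) ℝ) :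
    vLv A v = (pencilPoly A).toBilin' v v :=
  (toBilin'_apply _ _ _).symm

variable (A) in
/-- The quadratic module `M_L` of a linear pencil `L`. -/
def pencilModule : QuadraticModule (MvPolynomial (Fin n) ℝ) where
  carrier := {p | memQM A p}
  zero_mem' := ⟨0, 0, Fin.elim0, Fin.elim0, by simp⟩
  one_mem' := ⟨1, 0, 1, Fin.elim0, by simp⟩
  add_mem' := by
    rintro _ _ ⟨k₁, r₁, q₁, v₁, rfl⟩ ⟨k₂, r₂, q₂, v₂, rfl⟩
    refine ⟨k₁ + k₂, r₁ + r₂, Fin.append q₁ q₂, Fin.append v₁ v₂, ?_⟩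
    simp only [Fin.sum_univ_add, Fin.append_left, Fin.append_right]
    ring
  sq_mul_mem' := by
    rintro h _ ⟨k, r, q, v, rfl⟩
    refine ⟨k, r, fun i => h * q i, fun j => h • v j, ?_⟩
    simp only [vLv_eq_toBilin', map_smul, LinearMap.smul_apply, smul_eq_mul, mul_pow, mul_add,
      Finset.mul_sum, ← mul_assoc, ← sq]

lemma toBilin'_self_mem_pencilModule (v : Fin m → MvPolynomial (Fin n) ℝ) :
    (pencilPoly A).toBilin' v v ∈ pencilModule A :=
  ⟨0, 1, Fin.elim0, fun _ => v, by simp [vLv_eq_toBilin']⟩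

lemma eval_nonneg_of_memQM {x : Fin n → ℝ} (hx : x ∈ specSet A) {p : MvPolynomial (Fin n) ℝ}
    (hp : memQM A p) : 0 ≤ eval x p := by
  obtain ⟨k, r, q, v, rfl⟩ := hp
  have hvLv (j : Fin r) : 0 ≤ eval x (vLv A (v j)) := by
    rw [vLv_eq_toBilin', map_toBilin', map_eval_pencilPoly, toBilin'_apply']
    exact hx.dotProduct_mulVec_nonneg _
  simp only [map_add, map_sum, map_pow]
  exact add_nonneg (Finset.sum_nonneg fun i _ => sq_nonneg _) (Finset.sum_nonneg fun j _ => hvLv j)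

/-- The coefficient vector of the affine polynomial `uᵀ L v`, as a bilinear function of the
constant vectors `u` and `v`. -/
def pencilForm (A : Fin (n + 1) → Matrix (Fin m) (Fin m) ℝ) :
    (Fin m → ℝ) →ₗ[ℝ] (Fin m → ℝ) →ₗ[ℝ] (Fin (n + 1) → ℝ) :=
  LinearMap.mk₂ ℝ (fun u v i => (A i).toBilin' u v)
    (fun _ _ _ => by ext; simp) (fun _ _ _ => by ext; simp)
    (fun _ _ _ => by ext; simp) (fun _ _ _ => by ext; simp)

lemma pencilForm_comm (hA : ∀ i, (A i).IsSymm) (u v : Fin m → ℝ) :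
    pencilForm A u v = pencilForm A v u :=
  funext fun i => (isSymm_toBilin'_iff_isSymm.mpr (hA i)).eq u v

lemma affinePoly_pencilForm (u v : Fin m → ℝ) :
    affinePoly n (pencilForm A u v) = (pencilPoly A).toBilin' (C ∘ u) (C ∘ v) := by
  have hcoeff : pencilForm A u v = ∑ a, ∑ b, (u a * v b) • fun i => A i a b := by
    ext i
    simp [pencilForm, toBilin'_apply, mul_right_comm]
  simp only [hcoeff, map_sum, map_smul, ← pencilPoly_eq_affinePoly, toBilin'_apply,
    smul_eq_C_mul, C_mul, Function.comp_apply, mul_right_comm]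

lemma eval_affinePoly_pencilForm (x : Fin n → ℝ) (u v : Fin m → ℝ) :
    eval x (affinePoly n (pencilForm A u v)) = u ⬝ᵥ pencilEval A x *ᵥ v := by
  rw [affinePoly_pencilForm, map_toBilin', map_eval_pencilPoly, toBilin'_apply']
  simp [Function.comp_def]

lemma mem_specSet_of_forall_eval_nonneg (hA : ∀ i, (A i).IsSymm) {x : Fin n → ℝ}
    (hx : ∀ u, 0 ≤ eval x (affinePoly n (pencilForm A u u))) : x ∈ specSet A :=
  .of_dotProduct_mulVec_nonneg (isSymm_pencilEval hA x) fun u => by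
    simpa [eval_affinePoly_pencilForm] using hx u

lemma affinePoly_mem_closureAlongOne (hA : ∀ i, (A i).IsSymm) {a : Fin (n + 1) → ℝ}
    (ha : ∀ x ∈ specSet A, 0 ≤ eval x (affinePoly n a)) :
    affinePoly n a ∈ (pencilModule A).closureAlongOne := by
  refine QuadraticModule.mem_closureAlongOne_of_forall_dual_nonneg (B := pencilForm A)
    affinePoly_single_zero (pencilForm_comm hA) (fun v => ?_) (fun u hu v => ?_)
    (fun φ hφ hφA => ?_)
  · rw [affinePoly_pencilForm]
    exact toBilin'_self_mem_pencilModule _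
  · rw [affinePoly_pencilForm] at hu ⊢
    exact QuadraticModule.map_mem_closureIdeal_of_map_self_mem
      (isSymm_toBilin'_iff_isSymm.mpr (isSymm_pencilPoly hA)) toBilin'_self_mem_pencilModule hu _
  · rw [← eval_affinePoly hφ]
    refine ha _ (mem_specSet_of_forall_eval_nonneg hA fun u => ?_)
    rw [eval_affinePoly hφ]
    exact hφA u

end Pencil

/-- **Corollary.** A linear polynomial `f` is nonnegative on `S_L` if and only if
`f + ε ∈ M_L` for every `ε > 0`. -/
theorem nonneg_on_spectrahedron_iff_add_eps_mem_quadraticModule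
    (n m : ℕ) (A : Fin (n+1) → Matrix (Fin m) (Fin m) ℝ)
    (hsymm : ∀ i, (A i).IsSymm)
    (f : MvPolynomial (Fin n) ℝ) (hf : f.totalDegree ≤ 1) :
    (∀ x ∈ specSet A, 0 ≤ MvPolynomial.eval x f) ↔
      ∀ ε : ℝ, 0 < ε → memQM A (f + MvPolynomial.C ε) := by
  obtain ⟨a, rfl⟩ := exists_affinePoly_eq hf
  refine ⟨affinePoly_mem_closureAlongOne hsymm, fun h x hx => le_of_forall_pos_le_add
    fun ε hε => ?_⟩
  simpa using eval_nonneg_of_memQM hx (h ε hε)
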